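/- Let A' and B' be arrays obtained by floor-dividing arrays A and B by a positive integer m, and let C, C' be the respective min-plus convolutions. Then for every index k, m·C'[k] > C[k] - 2m, i.e., C'[k] ≥ ⌊C[k]/m⌋ - 1. -/

import Mathlib

/-- For the min-plus convolutions `C` of `(A,B)` and `C'` of the
floor-scaled arrays, we have `m * C'[k] > C[k] - 2m` for every valid index `k`. -/
theorem scaled_conv_lower_bound (n m : ℕ) (hn : 0 < n) (hm : 0 < m)
    (A B A' B' : ℕ → ℕ)
    (hA' : ∀ i, A' i = A i / m) (hB' : ∀ i, B' i = B i / m)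
    (C C' : ℕ → ℕ)
    (hC : ∀ k, k ≤ 2 * n - 2 →
      IsLeast {v : ℕ | ∃ i j, i < n ∧ j < n ∧ i + j = k ∧ v = A i + B j} (C k))
    (hC' : ∀ k, k ≤ 2 * n - 2 →
      IsLeast {v : ℕ | ∃ i j, i < n ∧ j < n ∧ i + j = k ∧ v = A' i + B' j} (C' k)) :
    ∀ k, k ≤ 2 * n - 2 → (m : ℤ) * (C' k : ℤ) > (C k : ℤ) - 2 * m := by
  intro k hk
  -- A pair attaining `C' k` bounds `C k`, and each entry satisfies `x < m * (x / m) + m`.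
  obtain ⟨i, j, hi, hj, hij, hv⟩ := (hC' k hk).1
  have hle : C k ≤ A i + B j := (hC k hk).2 ⟨i, j, hi, hj, hij, rfl⟩
  have ha : A i < m * (A i / m) + m := Nat.lt_mul_div_succ (A i) hm
  have hb : B j < m * (B j / m) + m := Nat.lt_mul_div_succ (B j) hm
  have key : C k < m * C' k + 2 * m := by
    rw [hv, hA', hB', mul_add]
    omega
  zify at key
  linarith
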